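/- (Monotonicity of Kleinman iteration) In the setting of Kleinman's algorithm for the LQR problem (A, B, Q > 0, R > 0, initial stabilizing gain K₀), the sequence {P_i} of Lyapunov-equation solutions is monotone nonincreasing in the positive semidefinite order: P* ≼ P_{i+1} ≼ P_i for all i, where P* is the stabilizing solution of the algebraic Riccati equation AᵀP + PA - PBR⁻¹BᵀP + Q = 0. -/

import Mathlib

open Matrix

/-- A real square matrix is Hurwitz if all its (complex) eigenvalues have negative
real part. -/
def IsHurwitz {n : ℕ} (M : Matrix (Fin n) (Fin n) ℝ) : Prop :=
  ∀ μ ∈ spectrum ℂ (M.map (algebraMap ℝ ℂ)), μ.re < 0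

/-!
For symmetric `P` with `L = -R⁻¹BᵀP`, completing the square in the gain `K` gives

`P(A + BK) + (A + BK)ᵀP + Q + KᵀRK = Ric(P) + (K - L)ᵀR(K - L)`,

so `Ric(P)` is the least value of the left side over all gains, attained at `K = L`. If `P` is the
cost of `K`, the left side vanishes, whence `Ric(P) ≼ 0`, and `P` is a supersolution of the Lyapunov
equation of the updated gain `L`. A symmetric `X` with `0 ≼ Ric(X)` is a subsolution of the Lyapunov
equation of every gain. Both inequalities then follow from the comparison principle for Lyapunov
equations with Hurwitz coefficient: if the spectrum of `a` lies in the open left half-plane, then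
`xa + a⋆x ≤ 0` forces `0 ≤ x`.

For the comparison principle, the Cayley transform `c = (1 + a)(1 - a)⁻¹` turns `xa + a⋆x ≤ 0` into
`c⋆xc ≤ x` and moves the spectrum into the open unit disc; hence `(c ^ k)⋆ x c ^ k ≤ x` for all `k`,
and the left side tends to `0`.
-/

open Filter Topology

/-- The Cayley transform of an element of a ring, sending the open left half-plane to the open unit
disc. It has this meaning only if `1 - a` is invertible, since `Ring.inverse` is `0` on
non-units. -/
noncomputable def cayley {𝒜 : Type*} [Ring 𝒜] (a : 𝒜) : 𝒜 :=
  (1 + a) * Ring.inverse (1 - a)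

theorem exists_mem_spectrum_of_mem_spectrum_cayley {𝕜 𝒜 : Type*} [Field 𝕜] [NeZero (2 : 𝕜)]
    [Ring 𝒜] [Algebra 𝕜 𝒜] {a : 𝒜} (ha : IsUnit (1 - a)) {μ : 𝕜}
    (hμ : μ ∈ spectrum 𝕜 (cayley a)) : ∃ z ∈ spectrum 𝕜 a, μ * (1 - z) = 1 + z := by
  have factor : algebraMap 𝕜 𝒜 μ - cayley a =
      (algebraMap 𝕜 𝒜 (μ - 1) - algebraMap 𝕜 𝒜 (μ + 1) * a) * Ring.inverse (1 - a) := by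
    rw [cayley, ← Ring.mul_inverse_cancel_right _ (algebraMap 𝕜 𝒜 μ) ha, ← sub_mul]
    congr 1
    simp only [map_sub, map_add, map_one]
    noncomm_ring
  have not_unit : ¬IsUnit (algebraMap 𝕜 𝒜 (μ - 1) - algebraMap 𝕜 𝒜 (μ + 1) * a) := fun h =>
    spectrum.mem_iff.1 hμ (factor ▸ h.mul ha.ringInverse)
  have hμ1 : μ + 1 ≠ 0 := by
    intro h0
    refine not_unit ?_
    rw [h0, map_zero, zero_mul, sub_zero, show μ - 1 = -2 by linear_combination h0]
    exact (IsUnit.mk0 _ (neg_ne_zero.2 two_ne_zero)).map (algebraMap 𝕜 𝒜)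
  refine ⟨(μ - 1) / (μ + 1), fun h => not_unit ?_, by field_simp; ring⟩
  rw [← mul_div_cancel₀ (μ - 1) hμ1, map_mul, ← mul_sub]
  exact ((IsUnit.mk0 _ hμ1).map (algebraMap 𝕜 𝒜)).mul h

theorem norm_one_add_lt_norm_one_sub_of_re_neg {z : ℂ} (hz : z.re < 0) : ‖1 + z‖ < ‖1 - z‖ := by
  refine lt_of_pow_lt_pow_left₀ 2 (norm_nonneg _) ?_
  simp only [Complex.sq_norm, Complex.normSq_apply, Complex.add_re, Complex.sub_re, Complex.add_im,
    Complex.sub_im, Complex.one_re, Complex.one_im]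
  linarith

theorem isTopologicallyNilpotent_of_spectralRadius_lt_one {𝒜 : Type*} [NormedRing 𝒜]
    [NormedAlgebra ℂ 𝒜] [CompleteSpace 𝒜] {a : 𝒜} (ha : spectralRadius ℂ a < 1) :
    IsTopologicallyNilpotent a := by
  obtain ⟨r, har, hr1⟩ := ENNReal.lt_iff_exists_nnreal_btwn.1 ha
  have pow_le : ∀ᶠ k : ℕ in atTop, ‖a ^ k‖ ≤ (r : ℝ) ^ k := by
    have gelfand := spectrum.pow_nnnorm_pow_one_div_tendsto_nhds_spectralRadius a
    filter_upwards [gelfand.eventually_lt_const har, eventually_gt_atTop 0] with k hk hk0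
    rw [one_div, ENNReal.rpow_inv_lt_iff (by positivity), ENNReal.rpow_natCast] at hk
    exact_mod_cast hk.le
  exact squeeze_zero_norm' pow_le
    (tendsto_pow_atTop_nhds_zero_of_lt_one r.2 (by exact_mod_cast hr1))

/-- An element of a complex algebra is Hurwitz if its spectrum lies in the open left half-plane.
For the complexification of a real matrix this is `IsHurwitz`, with an arbitrary index type. -/
def HasHurwitzSpectrum {𝒜 : Type*} [Ring 𝒜] [Algebra ℂ 𝒜] (a : 𝒜) : Prop :=
  ∀ μ ∈ spectrum ℂ a, μ.re < 0

namespace HasHurwitzSpectrum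

theorem isUnit_one_sub {𝒜 : Type*} [Ring 𝒜] [Algebra ℂ 𝒜] {a : 𝒜} (ha : HasHurwitzSpectrum a) :
    IsUnit (1 - a) := by
  have one_notMem : (1 : ℂ) ∉ spectrum ℂ a := fun h => (ha 1 h).not_ge zero_le_one
  simpa using spectrum.notMem_iff.1 one_notMem

theorem isTopologicallyNilpotent_cayley {𝒜 : Type*} [NormedRing 𝒜] [NormedAlgebra ℂ 𝒜]
    [CompleteSpace 𝒜] {a : 𝒜} (ha : HasHurwitzSpectrum a) :
    IsTopologicallyNilpotent (cayley a) := by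
  rcases subsingleton_or_nontrivial 𝒜 with _ | _
  · exact Subsingleton.elim 0 (cayley a) ▸ IsTopologicallyNilpotent.zero
  refine isTopologicallyNilpotent_of_spectralRadius_lt_one <|
    spectrum.spectralRadius_lt_of_forall_lt (cayley a) (r := 1) fun μ hμ => ?_
  obtain ⟨z, hz, hμz⟩ := exists_mem_spectrum_of_mem_spectrum_cayley ha.isUnit_one_sub hμ
  have norm_lt := norm_one_add_lt_norm_one_sub_of_re_neg (ha z hz)
  rw [← hμz, norm_mul] at norm_lt
  exact (mul_lt_iff_lt_one_left ((norm_nonneg _).lt_of_ne' fun h => by simp [h] at norm_lt)).1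
    norm_lt

end HasHurwitzSpectrum

section Lyapunov

variable {𝒜 : Type*}

theorem nonneg_of_star_mul_mul_le [Ring 𝒜] [StarRing 𝒜] [PartialOrder 𝒜] [StarOrderedRing 𝒜]
    [TopologicalSpace 𝒜] [ContinuousMul 𝒜] [ContinuousStar 𝒜] [ClosedIicTopology 𝒜] {c x : 𝒜}
    (hc : IsTopologicallyNilpotent c) (h : star c * x * c ≤ x) : 0 ≤ x := by
  have iterate_le (k : ℕ) : star (c ^ k) * x * c ^ k ≤ x := by
    induction k with
    | zero => simp
    | succ k ih =>
      calc star (c ^ (k + 1)) * x * c ^ (k + 1)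
          = star (c ^ k) * (star c * x * c) * c ^ k := by
            simp only [pow_succ', star_mul, mul_assoc]
        _ ≤ star (c ^ k) * x * c ^ k := star_left_conjugate_le_conjugate h _
        _ ≤ x := ih
  have tendsto_zero : Tendsto (fun k => star (c ^ k) * x * c ^ k) atTop (𝓝 0) := by
    simpa using (hc.star.mul_const x).mul hc
  exact le_of_tendsto' tendsto_zero iterate_le

theorem star_cayley_mul_mul_cayley_le [Ring 𝒜] [StarRing 𝒜] [PartialOrder 𝒜] [StarOrderedRing 𝒜]
    {a x : 𝒜} (ha : IsUnit (1 - a)) (h : x * a + star a * x ≤ 0) :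
    star (cayley a) * x * cayley a ≤ x := by
  set g := Ring.inverse (1 - a)
  have hg : (1 - a) * g = 1 := Ring.mul_inverse_cancel _ ha
  have conj_le : star (1 + a) * x * (1 + a) ≤ star (1 - a) * x * (1 - a) := by
    have expand : star (1 + a) * x * (1 + a) =
        star (1 - a) * x * (1 - a) + 2 • (x * a + star a * x) := by
      simp only [star_add, star_sub, star_one]
      noncomm_ring
    exact expand ▸ add_le_of_nonpos_right (nsmul_nonpos h 2)
  calc star (cayley a) * x * cayley a
      = star g * (star (1 + a) * x * (1 + a)) * g := by
        simp only [cayley, g, star_mul, mul_assoc]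
    _ ≤ star g * (star (1 - a) * x * (1 - a)) * g := star_left_conjugate_le_conjugate conj_le g
    _ = star ((1 - a) * g) * x * ((1 - a) * g) := by simp only [star_mul, mul_assoc]
    _ = x := by simp [hg]

theorem HasHurwitzSpectrum.nonneg_of_lyapunov [NormedRing 𝒜] [NormedAlgebra ℂ 𝒜]
    [CompleteSpace 𝒜] [StarRing 𝒜] [ContinuousStar 𝒜] [PartialOrder 𝒜] [StarOrderedRing 𝒜]
    [ClosedIicTopology 𝒜] {a x : 𝒜} (ha : HasHurwitzSpectrum a)
    (h : x * a + star a * x ≤ 0) : 0 ≤ x :=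
  nonneg_of_star_mul_mul_le ha.isTopologicallyNilpotent_cayley
    (star_cayley_mul_mul_cayley_le ha.isUnit_one_sub h)

end Lyapunov

section RealMatrix

open scoped MatrixOrder ComplexOrder

variable {n : Type*}

theorem star_map_ofReal (M : Matrix n n ℝ) :
    star (M.map (algebraMap ℝ ℂ)) = Mᵀ.map (algebraMap ℝ ℂ) :=
  (conjTranspose_map _ (algebraMap_star_comm (A := ℂ))).symm

theorem map_ofReal_nonneg_iff [Finite n] {M : Matrix n n ℝ} :
    0 ≤ M.map (algebraMap ℝ ℂ) ↔ 0 ≤ M := by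
  classical
  cases nonempty_fintype n
  constructor <;> intro h
  · have hM : (M.map (algebraMap ℝ ℂ)).PosSemidef := h.posSemidef
    have isHermitian : M.IsHermitian :=
      Matrix.map_injective (algebraMap ℝ ℂ).injective
        ((star_map_ofReal M).symm.trans hM.isHermitian)
    refine (PosSemidef.of_dotProduct_mulVec_nonneg isHermitian fun x => ?_).nonneg
    have quadraticForm_map : star (algebraMap ℝ ℂ ∘ x) ⬝ᵥ
        (M.map (algebraMap ℝ ℂ) *ᵥ (algebraMap ℝ ℂ ∘ x)) =
          algebraMap ℝ ℂ (star x ⬝ᵥ (M *ᵥ x)) := by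
      simp [dotProduct, mulVec]
    have nonneg := hM.dotProduct_mulVec_nonneg (algebraMap ℝ ℂ ∘ x)
    rw [quadraticForm_map] at nonneg
    exact Complex.zero_le_real.1 nonneg
  · obtain ⟨L, rfl⟩ := CStarAlgebra.nonneg_iff_eq_star_mul_self.1 h
    have map_star_mul : (star L * L).map (algebraMap ℝ ℂ) =
        star (L.map (algebraMap ℝ ℂ)) * L.map (algebraMap ℝ ℂ) := by
      rw [Matrix.map_mul, star_map_ofReal]
      rfl
    exact map_star_mul ▸ star_mul_self_nonneg _

open scoped Matrix.Norms.L2Operator in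
theorem nonneg_of_lyapunov_real [Fintype n] [DecidableEq n] {F X : Matrix n n ℝ}
    (hF : HasHurwitzSpectrum (F.map (algebraMap ℝ ℂ))) (h : X * F + Fᵀ * X ≤ 0) : 0 ≤ X := by
  refine map_ofReal_nonneg_iff.1 (hF.nonneg_of_lyapunov ?_)
  rw [← neg_nonneg, ← map_ofReal_nonneg_iff] at h
  rw [← neg_nonneg, star_map_ofReal, ← Matrix.map_mul, ← Matrix.map_mul,
    ← Matrix.map_add _ (map_add _)]
  rwa [Matrix.map_neg _ (map_neg _)] at h

end RealMatrix

section Riccati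

variable {𝕜 n m : Type*} [CommRing 𝕜] [Fintype n] [Fintype m]

/-- The left side minus the right side of the Lyapunov equation for the cost `P` of the gain `K`:
it vanishes iff `P(A + BK) + (A + BK)ᵀP = -(Q + KᵀRK)`. -/
def lyapunovResidual (A : Matrix n n 𝕜) (B : Matrix n m 𝕜) (Q : Matrix n n 𝕜) (R : Matrix m m 𝕜)
    (K : Matrix m n 𝕜) (P : Matrix n n 𝕜) : Matrix n n 𝕜 :=
  P * (A + B * K) + (A + B * K)ᵀ * P + (Q + Kᵀ * R * K)

variable [DecidableEq m]

/-- The left side `Ric(P)` of the algebraic Riccati equation. -/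
noncomputable def riccatiResidual (A : Matrix n n 𝕜) (B : Matrix n m 𝕜) (Q : Matrix n n 𝕜)
    (R : Matrix m m 𝕜) (P : Matrix n n 𝕜) : Matrix n n 𝕜 :=
  Aᵀ * P + P * A - P * B * R⁻¹ * Bᵀ * P + Q

/-- The gain `-R⁻¹BᵀP` to which the Kleinman iteration passes from the cost matrix `P`. -/
noncomputable def improvedGain (B : Matrix n m 𝕜) (R : Matrix m m 𝕜) (P : Matrix n n 𝕜) :
    Matrix m n 𝕜 :=
  -(R⁻¹ * Bᵀ * P)

variable {A : Matrix n n 𝕜} {B : Matrix n m 𝕜} {Q : Matrix n n 𝕜} {R : Matrix m m 𝕜}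
  {P : Matrix n n 𝕜}

theorem lyapunovResidual_eq_riccatiResidual_add (hRsymm : R.IsSymm) (hR : IsUnit R)
    (hP : P.IsSymm) (K : Matrix m n 𝕜) :
    lyapunovResidual A B Q R K P = riccatiResidual A B Q R P +
      (K - improvedGain B R P)ᵀ * R * (K - improvedGain B R P) := by
  set L := improvedGain B R P with hL
  have hRL : R * L = -(Bᵀ * P) := by
    rw [hL, improvedGain, Matrix.mul_neg, Matrix.mul_assoc,
      Matrix.mul_nonsing_inv_cancel_left _ _ ((Matrix.isUnit_iff_isUnit_det R).1 hR)]
  have hLR : Lᵀ * R = -(P * B) := by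
    simpa [hRsymm.eq, hP.eq] using congrArg transpose hRL
  have quadratic_term : P * B * R⁻¹ * Bᵀ * P = -(P * B * L) := by
    simp only [hL, improvedGain, Matrix.mul_neg, neg_neg, Matrix.mul_assoc]
  have square : (K - L)ᵀ * R * (K - L) =
      Kᵀ * R * K + P * B * K + Kᵀ * Bᵀ * P - P * B * L := by
    rw [transpose_sub, Matrix.sub_mul, Matrix.mul_sub, Matrix.sub_mul, Matrix.sub_mul, hLR,
      Matrix.mul_assoc Kᵀ R L, hRL]
    simp only [Matrix.mul_neg, Matrix.neg_mul, Matrix.mul_assoc]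
    abel
  rw [lyapunovResidual, riccatiResidual, quadratic_term, square]
  simp only [transpose_add, transpose_mul, Matrix.mul_add, Matrix.add_mul, Matrix.mul_assoc]
  abel

theorem lyapunovResidual_improvedGain (hRsymm : R.IsSymm) (hR : IsUnit R) (hP : P.IsSymm) :
    lyapunovResidual A B Q R (improvedGain B R P) P = riccatiResidual A B Q R P := by
  simp [lyapunovResidual_eq_riccatiResidual_add hRsymm hR hP]

end Riccati

section Kleinman

open scoped MatrixOrder

variable {n m : Type*} [Fintype n] [Fintype m]
  {A : Matrix n n ℝ} {B : Matrix n m ℝ} {Q : Matrix n n ℝ} {R : Matrix m m ℝ}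

theorem le_of_lyapunovResidual_le [DecidableEq n] {K : Matrix m n ℝ} {X Y : Matrix n n ℝ}
    (hK : HasHurwitzSpectrum ((A + B * K).map (algebraMap ℝ ℂ)))
    (h : lyapunovResidual A B Q R K Y ≤ lyapunovResidual A B Q R K X) : X ≤ Y := by
  refine sub_nonneg.1 (nonneg_of_lyapunov_real hK ?_)
  calc (Y - X) * (A + B * K) + (A + B * K)ᵀ * (Y - X)
      = lyapunovResidual A B Q R K Y - lyapunovResidual A B Q R K X := by
        simp only [lyapunovResidual, Matrix.sub_mul, Matrix.mul_sub]
        abel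
    _ ≤ 0 := sub_nonpos.2 h

variable [DecidableEq m]

theorem riccatiResidual_le_lyapunovResidual {P : Matrix n n ℝ} (hR : R.PosDef) (hP : P.IsSymm)
    (K : Matrix m n ℝ) : riccatiResidual A B Q R P ≤ lyapunovResidual A B Q R K P := by
  have hRsymm : R.IsSymm := isHermitian_iff_isSymm.1 hR.isHermitian
  rw [lyapunovResidual_eq_riccatiResidual_add hRsymm hR.isUnit hP]
  exact le_add_of_nonneg_right (hR.posSemidef.conjTranspose_mul_mul_same _).nonneg

theorem kleinman_iteration_monotone_general [DecidableEq n] (hR : R.PosDef)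
    {K : ℕ → Matrix m n ℝ} {P : ℕ → Matrix n n ℝ}
    (hK : ∀ i, HasHurwitzSpectrum ((A + B * K i).map (algebraMap ℝ ℂ)))
    (hP : ∀ i, (P i).IsSymm) (hLyap : ∀ i, lyapunovResidual A B Q R (K i) (P i) = 0)
    (hKupd : ∀ i, K (i + 1) = improvedGain B R (P i)) (i : ℕ) :
    P (i + 1) ≤ P i ∧ ∀ X : Matrix n n ℝ, X.IsSymm → 0 ≤ riccatiResidual A B Q R X → X ≤ P i := by
  constructor
  · have hRsymm : R.IsSymm := isHermitian_iff_isSymm.1 hR.isHermitian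
    refine le_of_lyapunovResidual_le (Q := Q) (R := R) (hK (i + 1)) ?_
    calc lyapunovResidual A B Q R (K (i + 1)) (P i)
        = riccatiResidual A B Q R (P i) := by
          rw [hKupd, lyapunovResidual_improvedGain hRsymm hR.isUnit (hP i)]
      _ ≤ lyapunovResidual A B Q R (K i) (P i) := riccatiResidual_le_lyapunovResidual hR (hP i) _
      _ = lyapunovResidual A B Q R (K (i + 1)) (P (i + 1)) := by rw [hLyap, hLyap]
  · intro X hX hRic
    refine le_of_lyapunovResidual_le (Q := Q) (R := R) (hK i) ?_
    calc lyapunovResidual A B Q R (K i) (P i)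
        = 0 := hLyap i
      _ ≤ riccatiResidual A B Q R X := hRic
      _ ≤ lyapunovResidual A B Q R (K i) X := riccatiResidual_le_lyapunovResidual hR hX _

end Kleinman

/-- **Monotonicity of the Kleinman iteration.** In Kleinman's algorithm for the LQR
problem `(A, B, Q > 0, R > 0)` with initial stabilizing gain `K₀`, the sequence of
Lyapunov-equation solutions satisfies `P* ≼ P_{i+1} ≼ P_i` in the Loewner order,
where `P*` is the stabilizing solution of the algebraic Riccati equation. -/
theorem kleinman_iteration_monotone {n m : ℕ}
    (A : Matrix (Fin n) (Fin n) ℝ) (B : Matrix (Fin n) (Fin m) ℝ)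
    (Q : Matrix (Fin n) (Fin n) ℝ) (R : Matrix (Fin m) (Fin m) ℝ)
    (hQ : Q.PosDef) (hR : R.PosDef)
    (K : ℕ → Matrix (Fin m) (Fin n) ℝ) (P : ℕ → Matrix (Fin n) (Fin n) ℝ)
    (hHur : ∀ i, IsHurwitz (A + B * K i))
    (hPsymm : ∀ i, (P i).IsSymm)
    (hLyap : ∀ i, P i * (A + B * K i) + (A + B * K i)ᵀ * P i = -(Q + (K i)ᵀ * R * K i))
    (hKupd : ∀ i, K (i + 1) = -(R⁻¹ * Bᵀ * P i))
    (Pstar : Matrix (Fin n) (Fin n) ℝ) (hPstarSymm : Pstar.IsSymm)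
    (hARE : Aᵀ * Pstar + Pstar * A - Pstar * B * R⁻¹ * Bᵀ * Pstar + Q = 0)
    (hPstarStab : IsHurwitz (A + B * (-(R⁻¹ * Bᵀ * Pstar)))) :
    ∀ i, (P i - P (i + 1)).PosSemidef ∧ (P i - Pstar).PosSemidef := fun i =>
  have hRic : riccatiResidual A B Q R Pstar = 0 := hARE
  have h := kleinman_iteration_monotone_general hR hHur hPsymm
    (fun j => eq_neg_iff_add_eq_zero.1 (hLyap j)) hKupd i
  ⟨h.1, h.2 Pstar hPstarSymm (hRic ▸ PosSemidef.zero).nonneg⟩
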